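/- In the multi-agent Gaussian estimation problem, suppose the gains F_1, …, F_n (with F_i ∈ ℝ^{d_z^i × d_y^i}) satisfy Σ_{j=1}^n ( S_ij F_j Σ̂_ji − S_ij L_j Θ̂_i ) = 0 for every i ∈ {1,…,n}. Then the strategy g* given by ẑ_i = L_i x̂_0 + F_i ỹ_i minimizes the expected team estimation error: J(g*) ≤ J(g) for every measurable, square-integrable strategy g = (g_1,…,g_n) with ẑ_i = g_i(y_0, y_i). -/

import Mathlib

open MeasureTheory ProbabilityTheory Matrix

/-!
For the strategy `ẑᵢ = Lᵢ x̂₀ + Fᵢ ỹᵢ` the estimation errors are `Lᵢ x̃ − Fᵢ ỹᵢ`, linear in the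
innovations `x̃ = x − E[x | y₀]` and `ỹᵢ`. Agent `i`'s weighted error `∑ⱼ Sᵢⱼ (Lⱼ x̃ − Fⱼ ỹⱼ)` is
therefore independent of `y₀`, and the stationarity condition says exactly that it is uncorrelated
with `ỹᵢ`. For jointly Gaussian vectors this makes it independent of the pair `(y₀, yᵢ)`, hence
orthogonal to every admissible change of `ẑᵢ`. Convexity of the quadratic form of `S` turns these
orthogonality relations into global optimality.
-/

section LinearPrediction

variable {Ω : Type*} {mΩ : MeasurableSpace Ω} {μ : Measure Ω} {σ τ ρ : Type*}

/-- The cross-covariance matrix of two random vectors: `crossCov μ X Y k l` is the covariance of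
`X k` and `Y l`. -/
noncomputable def crossCov (μ : Measure Ω) (X : Ω → σ → ℝ) (Y : Ω → τ → ℝ) : Matrix σ τ ℝ :=
  Matrix.of fun k l => cov[fun ω => X ω k, fun ω => Y ω l; μ]

theorem crossCov_apply (X : Ω → σ → ℝ) (Y : Ω → τ → ℝ) (k : σ) (l : τ) :
    crossCov μ X Y k l = cov[fun ω => X ω k, fun ω => Y ω l; μ] := rfl

theorem crossCov_mulVec_left [IsFiniteMeasure μ] [Fintype σ] {X : Ω → σ → ℝ} {Y : Ω → τ → ℝ}
    (hX : ∀ k, MemLp (fun ω => X ω k) 2 μ) (hY : ∀ l, MemLp (fun ω => Y ω l) 2 μ)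
    (A : Matrix ρ σ ℝ) :
    crossCov μ (fun ω => A *ᵥ X ω) Y = A * crossCov μ X Y := by
  ext r l
  simp only [crossCov_apply, mulVec, dotProduct, mul_apply]
  rw [covariance_fun_sum_left (fun k => (hX k).const_mul _) (hY l)]
  simp only [covariance_const_mul_left]

theorem exists_forall_inner_sub_sum_smul_eq_zero {H : Type*} [NormedAddCommGroup H]
    [InnerProductSpace ℝ H] [Fintype τ] (u : H) (w : τ → H) :
    ∃ c : τ → ℝ, ∀ l, inner ℝ (u - ∑ k, c k • w k) (w l) = 0 := by
  have := FiniteDimensional.span_of_finite ℝ (Set.finite_range w)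
  obtain ⟨c, hc⟩ := (Submodule.mem_span_range_iff_exists_fun ℝ).1
    ((Submodule.span ℝ (Set.range w)).starProjection_apply_mem u)
  refine ⟨c, fun l => ?_⟩
  rw [hc]
  exact Submodule.inner_left_of_mem_orthogonal (Submodule.subset_span (Set.mem_range_self l))
    (Submodule.sub_starProjection_mem_orthogonal u)

theorem inner_toLp_sub_integral {X Y : Ω → ℝ} (hX : MemLp (fun ω => X ω - μ[X]) 2 μ)
    (hY : MemLp (fun ω => Y ω - μ[Y]) 2 μ) :
    inner ℝ (hX.toLp _) (hY.toLp _) = cov[X, Y; μ] := by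
  rw [L2.inner_def, covariance]
  refine integral_congr_ae ?_
  filter_upwards [hX.coeFn_toLp, hY.coeFn_toLp] with ω hXω hYω
  rw [hXω, hYω, Real.inner_apply]

theorem exists_covariance_sub_dotProduct_eq_zero [IsFiniteMeasure μ] [Fintype τ] {X : Ω → ℝ}
    {Y : Ω → τ → ℝ} (hX : MemLp X 2 μ) (hY : MemLp Y 2 μ) :
    ∃ c : τ → ℝ, ∀ l, cov[fun ω => X ω - c ⬝ᵥ Y ω, fun ω => Y ω l; μ] = 0 := by
  have hYk := hY.eval
  have hX' : MemLp (fun ω => X ω - μ[X]) 2 μ := hX.sub (memLp_const _)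
  have hY' k : MemLp (fun ω => Y ω k - μ[fun ω => Y ω k]) 2 μ := (hYk k).sub (memLp_const _)
  obtain ⟨c, hc⟩ := exists_forall_inner_sub_sum_smul_eq_zero hX'.toLp fun k => (hY' k).toLp
  refine ⟨c, fun l => ?_⟩
  simp only [dotProduct]
  rw [covariance_fun_sub_left hX (memLp_finsetSum _ fun k _ => (hYk k).const_mul _) (hYk l),
    covariance_fun_sum_left (fun k => (hYk k).const_mul _) (hYk l)]
  simpa only [inner_sub_left, sum_inner, real_inner_smul_left, covariance_const_mul_left,
    inner_toLp_sub_integral] using hc l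

theorem exists_crossCov_sub_mulVec_eq_zero [IsFiniteMeasure μ] [Fintype σ] [Fintype τ]
    {X : Ω → σ → ℝ} {Y : Ω → τ → ℝ} (hX : MemLp X 2 μ) (hY : MemLp Y 2 μ) :
    ∃ C : Matrix σ τ ℝ, crossCov μ (fun ω => X ω - C *ᵥ Y ω) Y = 0 := by
  choose c hc using fun k => exists_covariance_sub_dotProduct_eq_zero (hX.eval k) hY
  exact ⟨Matrix.of c, Matrix.ext hc⟩

end LinearPrediction

section Independence

variable {Ω E F G σ τ : Type*} {mΩ : MeasurableSpace Ω} {μ : Measure Ω}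

theorem indepFun_of_crossCov_eq_zero [Finite σ] [Finite τ] {X : Ω → σ → ℝ} {Y : Ω → τ → ℝ}
    (hXY : HasGaussianLaw (fun ω => (X ω, Y ω)) μ)
    (h : crossCov μ X Y = 0) : IndepFun X Y μ :=
  HasGaussianLaw.indepFun_of_covariance_eval (X := fun k ω => X ω k) (Y := fun l ω => Y ω l) hXY
    fun k l => congr_fun₂ h k l

theorem condExp_comap_ae_eq_integral_of_indepFun [IsFiniteMeasure μ] [MeasurableSpace F]
    {X : Ω → ℝ} {Y : Ω → F} (hX : AEMeasurable X μ) (hY : Measurable Y) (hXY : IndepFun X Y μ) :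
    μ[X | MeasurableSpace.comap Y inferInstance] =ᵐ[μ] fun _ => μ[X] := by
  have hmk : Indep (MeasurableSpace.comap (hX.mk X) inferInstance)
      (MeasurableSpace.comap Y inferInstance) μ :=
    (IndepFun_iff_Indep _ _ _).1 (hXY.congr hX.ae_eq_mk .rfl)
  calc
    μ[X | MeasurableSpace.comap Y inferInstance]
      =ᵐ[μ] μ[hX.mk X | MeasurableSpace.comap Y inferInstance] := condExp_congr_ae hX.ae_eq_mk
    _ =ᵐ[μ] fun _ => μ[hX.mk X] :=
      condExp_indep_eq hX.measurable_mk.comap_le hY.comap_le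
        (comap_measurable (hX.mk X)).stronglyMeasurable hmk
    _ =ᵐ[μ] fun _ => μ[X] := by rw [integral_congr_ae hX.ae_eq_mk]

theorem indepFun_prodMk_of_hasGaussianLaw
    [NormedAddCommGroup E] [NormedSpace ℝ E] [CompleteSpace E] [SecondCountableTopology E]
    [MeasurableSpace E] [BorelSpace E]
    [NormedAddCommGroup F] [NormedSpace ℝ F] [CompleteSpace F] [SecondCountableTopology F]
    [MeasurableSpace F] [BorelSpace F]
    [NormedAddCommGroup G] [NormedSpace ℝ G] [CompleteSpace G] [SecondCountableTopology G]
    [MeasurableSpace G] [BorelSpace G]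
    {R : Ω → E} {U : Ω → F} {V : Ω → G} (hG : HasGaussianLaw (fun ω => (R ω, U ω, V ω)) μ)
    (hU : IndepFun R U μ) (hV : IndepFun R V μ) : IndepFun R (fun ω => (U ω, V ω)) μ := by
  have := hG.isProbabilityMeasure
  refine hG.indepFun_of_covariance_strongDual fun L₁ L₂ => ?_
  have hsplit : L₂ ∘ (fun ω => (U ω, V ω))
      = (L₂ ∘L ContinuousLinearMap.inl ℝ F G) ∘ U +
        (L₂ ∘L ContinuousLinearMap.inr ℝ F G) ∘ V := by
    ext ω
    simp [← map_add]
  have hR2 := (hG.fst.map L₁).memLp_two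
  have hU2 := (hG.snd.fst.map (L₂ ∘L ContinuousLinearMap.inl ℝ F G)).memLp_two
  have hV2 := (hG.snd.snd.map (L₂ ∘L ContinuousLinearMap.inr ℝ F G)).memLp_two
  rw [hsplit, covariance_add_right hR2 hU2 hV2,
    (hU.comp (by fun_prop) (by fun_prop)).covariance_eq_zero hR2 hU2,
    (hV.comp (by fun_prop) (by fun_prop)).covariance_eq_zero hR2 hV2, add_zero]

theorem hasGaussianLaw_sub_const [NormedAddCommGroup E] [NormedSpace ℝ E]
    [MeasurableSpace E] [BorelSpace E] {X : Ω → E} (hX : HasGaussianLaw X μ) (c : E) :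
    HasGaussianLaw (fun ω => X ω - c) μ := by
  have := hX.isGaussian_map
  refine ⟨?_⟩
  rw [show (fun ω => X ω - c) = (fun z => z - c) ∘ X from rfl,
    ← AEMeasurable.map_map_of_aemeasurable (by fun_prop) hX.aemeasurable]
  infer_instance

end Independence

section Innovation

variable {Ω σ τ ρ θ : Type*} {mΩ : MeasurableSpace Ω} {μ : Measure Ω}

/-- The innovation `X − E[X | Y]` of the random vector `X` with respect to `Y`, taken
coordinatewise. -/
noncomputable def innovation (μ : Measure Ω) (Y : Ω → τ → ℝ) (X : Ω → σ → ℝ) : Ω → σ → ℝ :=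
  fun ω k => X ω k - (μ[fun ω => X ω k | MeasurableSpace.comap Y inferInstance]) ω

theorem exists_measurable_sub_innovation_eq_comp (μ : Measure Ω) (Y : Ω → τ → ℝ)
    (X : Ω → σ → ℝ) :
    ∃ ψ : (τ → ℝ) → σ → ℝ, Measurable ψ ∧ ∀ ω, X ω - innovation μ Y X ω = ψ (Y ω) := by
  have hk (k : σ) := (stronglyMeasurable_condExp (f := fun ω => X ω k) (μ := μ)
    (m := MeasurableSpace.comap Y inferInstance)).measurable.exists_eq_measurable_comp
  choose ψ hψ hcond using hk
  refine ⟨fun t k => ψ k t, by fun_prop, fun ω => funext fun k => ?_⟩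
  simp only [innovation, hcond, Pi.sub_apply, Function.comp_apply, sub_sub_cancel]

theorem integral_innovation [IsFiniteMeasure μ] {X : Ω → σ → ℝ} {Y : Ω → τ → ℝ}
    (hY : Measurable Y) {k : σ} (hX : Integrable (fun ω => X ω k) μ) :
    ∫ ω, innovation μ Y X ω k ∂μ = 0 := by
  simp only [innovation]
  rw [integral_sub hX integrable_condExp, integral_condExp hY.comap_le, sub_self]

variable {X : Ω → σ → ℝ} {Y : Ω → τ → ℝ}

theorem hasGaussianLaw_sub_mulVec_prodMk [Finite σ] [Fintype τ]
    (hXY : HasGaussianLaw (fun ω => (X ω, Y ω)) μ) (C : Matrix σ τ ℝ) :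
    HasGaussianLaw (fun ω => (X ω - C *ᵥ Y ω, Y ω)) μ := by
  cases nonempty_fintype σ
  exact hXY.map_fun ((ContinuousLinearMap.fst ℝ (σ → ℝ) (τ → ℝ) -
    C.mulVecLin.toContinuousLinearMap ∘L ContinuousLinearMap.snd ℝ (σ → ℝ) (τ → ℝ)).prod
      (ContinuousLinearMap.snd ℝ (σ → ℝ) (τ → ℝ)))

theorem innovation_ae_eq_of_crossCov_eq_zero [Finite σ] [Fintype τ]
    (hXY : HasGaussianLaw (fun ω => (X ω, Y ω)) μ) (hY : Measurable Y) {C : Matrix σ τ ℝ}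
    (hC : crossCov μ (fun ω => X ω - C *ᵥ Y ω) Y = 0) :
    innovation μ Y X =ᵐ[μ]
      fun ω => X ω - C *ᵥ Y ω - fun k => μ[fun ω => (X ω - C *ᵥ Y ω) k] := by
  cases nonempty_fintype σ
  have := hXY.isProbabilityMeasure
  have hD := hasGaussianLaw_sub_mulVec_prodMk hXY C
  have hDY := indepFun_of_crossCov_eq_zero hD hC
  have hk k : μ[fun ω => X ω k | MeasurableSpace.comap Y inferInstance] =ᵐ[μ]
      fun ω => μ[fun ω => (X ω - C *ᵥ Y ω) k] + (C *ᵥ Y ω) k := by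
    have hDk := hD.fst.eval k
    have hCYint : Integrable (fun ω => (C *ᵥ Y ω) k) μ :=
      ((hXY.snd.map_fun C.mulVecLin.toContinuousLinearMap).eval k).integrable
    have hCYmeas : Measurable[MeasurableSpace.comap Y inferInstance] fun ω => (C *ᵥ Y ω) k :=
      (show Measurable fun y : τ → ℝ => (C *ᵥ y) k by fun_prop).comp (comap_measurable Y)
    have hsplit : (fun ω => X ω k) =
        (fun ω => (X ω - C *ᵥ Y ω) k) + fun ω => (C *ᵥ Y ω) k := by
      ext ω
      simp
    have hind := condExp_comap_ae_eq_integral_of_indepFun hDk.aemeasurable hY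
      (hDY.comp (measurable_pi_apply k) measurable_id)
    nth_rw 1 [hsplit]
    filter_upwards [condExp_add hDk.integrable hCYint (MeasurableSpace.comap Y inferInstance),
      hind] with ω hadd hconst
    rw [hadd, Pi.add_apply, hconst,
      condExp_of_stronglyMeasurable hY.comap_le hCYmeas.stronglyMeasurable hCYint]
  filter_upwards [ae_all_iff.2 hk] with ω hω
  ext k
  simp only [innovation, hω k, Pi.sub_apply]
  ring

variable [Finite τ]

theorem indepFun_innovation [Finite σ]
    (hXY : HasGaussianLaw (fun ω => (X ω, Y ω)) μ) (hY : Measurable Y) :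
    IndepFun (innovation μ Y X) Y μ := by
  cases nonempty_fintype σ
  cases nonempty_fintype τ
  have := hXY.isProbabilityMeasure
  obtain ⟨C, hC⟩ := exists_crossCov_sub_mulVec_eq_zero hXY.fst.memLp_two hXY.snd.memLp_two
  have hDY := indepFun_of_crossCov_eq_zero (hasGaussianLaw_sub_mulVec_prodMk hXY C) hC
  exact (hDY.comp (measurable_id.sub_const _) measurable_id).congr
    (innovation_ae_eq_of_crossCov_eq_zero hXY hY hC).symm .rfl

theorem hasGaussianLaw_innovation [Finite σ]
    (hXY : HasGaussianLaw (fun ω => (X ω, Y ω)) μ) (hY : Measurable Y) :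
    HasGaussianLaw (innovation μ Y X) μ := by
  cases nonempty_fintype σ
  cases nonempty_fintype τ
  have := hXY.isProbabilityMeasure
  obtain ⟨C, hC⟩ := exists_crossCov_sub_mulVec_eq_zero hXY.fst.memLp_two hXY.snd.memLp_two
  exact (hasGaussianLaw_sub_const (hasGaussianLaw_sub_mulVec_prodMk hXY C).fst _).congr
    (innovation_ae_eq_of_crossCov_eq_zero hXY hY hC).symm

theorem hasGaussianLaw_innovation_prodMk [Finite σ]
    (hXY : HasGaussianLaw (fun ω => (X ω, Y ω)) μ) (hY : Measurable Y) :
    HasGaussianLaw (fun ω => (innovation μ Y X ω, Y ω)) μ := by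
  cases nonempty_fintype σ
  cases nonempty_fintype τ
  exact (indepFun_innovation hXY hY).hasGaussianLaw (hasGaussianLaw_innovation hXY hY) hXY.snd

theorem indepFun_mulVec_innovation [Fintype σ] [Finite ρ] [Finite θ]
    (hXY : HasGaussianLaw (fun ω => (X ω, Y ω)) μ) (hY : Measurable Y) (A : Matrix ρ σ ℝ)
    (f : θ → σ)
    (h : crossCov μ (fun ω => A *ᵥ innovation μ Y X ω) (fun ω => innovation μ Y X ω ∘ f) = 0) :
    IndepFun (fun ω => A *ᵥ innovation μ Y X ω) (fun ω => (Y ω, X ω ∘ f)) μ := by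
  cases nonempty_fintype ρ
  cases nonempty_fintype θ
  cases nonempty_fintype τ
  have hW := hasGaussianLaw_innovation_prodMk hXY hY
  let AW : (σ → ℝ) × (τ → ℝ) →L[ℝ] ρ → ℝ :=
    A.mulVecLin.toContinuousLinearMap ∘L ContinuousLinearMap.fst ℝ (σ → ℝ) (τ → ℝ)
  let Wf : (σ → ℝ) × (τ → ℝ) →L[ℝ] θ → ℝ :=
    (LinearMap.funLeft ℝ ℝ f).toContinuousLinearMap ∘L ContinuousLinearMap.fst ℝ (σ → ℝ) (τ → ℝ)
  have hAWf : IndepFun (fun ω => A *ᵥ innovation μ Y X ω) (fun ω => innovation μ Y X ω ∘ f) μ :=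
    indepFun_of_crossCov_eq_zero (hW.map_fun (AW.prod Wf)) h
  have hAY : IndepFun (fun ω => A *ᵥ innovation μ Y X ω) Y μ :=
    (indepFun_innovation hXY hY).comp (φ := fun w => A *ᵥ w) (by fun_prop) measurable_id
  have hAYWf : IndepFun (fun ω => A *ᵥ innovation μ Y X ω)
      (fun ω => (Y ω, innovation μ Y X ω ∘ f)) μ :=
    indepFun_prodMk_of_hasGaussianLaw
      (hW.map_fun (AW.prod ((ContinuousLinearMap.snd ℝ (σ → ℝ) (τ → ℝ)).prod Wf))) hAY hAWf
  obtain ⟨ψ, hψ, hXψ⟩ := exists_measurable_sub_innovation_eq_comp μ Y X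
  have hX ω : X ω ∘ f = innovation μ Y X ω ∘ f + ψ (Y ω) ∘ f := by
    rw [← hXψ]
    ext q
    simp
  simp only [hX]
  exact hAYWf.comp (φ := id) (ψ := fun v => (v.1, v.2 + ψ v.1 ∘ f)) measurable_id (by fun_prop)

theorem integral_comp_mul_dotProduct_innovation_eq_zero [Fintype σ] [Finite θ]
    (hXY : HasGaussianLaw (fun ω => (X ω, Y ω)) μ) (hY : Measurable Y)
    (a : σ → ℝ) (f : θ → σ)
    (h : ∀ q, (a ᵥ* crossCov μ (innovation μ Y X) (innovation μ Y X)) (f q) = 0)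
    {φ : (τ → ℝ) × (θ → ℝ) → ℝ} (hφ : Measurable φ) :
    ∫ ω, φ (Y ω, X ω ∘ f) * (a ⬝ᵥ innovation μ Y X ω) ∂μ = 0 := by
  cases nonempty_fintype θ
  cases nonempty_fintype τ
  have := hXY.isProbabilityMeasure
  have hW := hasGaussianLaw_innovation hXY hY
  have hWk k : MemLp (fun ω => innovation μ Y X ω k) 2 μ := (hW.eval k).memLp_two
  have hcov : crossCov μ (fun ω => replicateRow Unit a *ᵥ innovation μ Y X ω)
      (fun ω => innovation μ Y X ω ∘ f) = 0 :=
    (crossCov_mulVec_left hWk (fun l => hWk (f l)) _).trans (Matrix.ext fun _ q => h q)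
  have hind : IndepFun (fun ω => a ⬝ᵥ innovation μ Y X ω) (fun ω => φ (Y ω, X ω ∘ f)) μ :=
    (indepFun_mulVec_innovation hXY hY _ f hcov).comp (measurable_pi_apply ()) hφ
  have hmean : ∫ ω, a ⬝ᵥ innovation μ Y X ω ∂μ = 0 := by
    simp only [dotProduct]
    rw [integral_finsetSum _ fun k _ => ((hW.eval k).integrable.const_mul _)]
    simp only [integral_const_mul, integral_innovation hY (hXY.fst.eval _).integrable, mul_zero,
      Finset.sum_const_zero]
  have hVmeas : AEMeasurable (fun ω => (Y ω, X ω ∘ f)) μ :=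
    (show Measurable fun v : (σ → ℝ) × (τ → ℝ) => (v.2, v.1 ∘ f) by
      fun_prop).comp_aemeasurable hXY.aemeasurable
  have hRmeas : AEMeasurable (fun ω => a ⬝ᵥ innovation μ Y X ω) μ :=
    (show Measurable fun w : σ → ℝ => a ⬝ᵥ w by fun_prop).comp_aemeasurable hW.aemeasurable
  calc
    ∫ ω, φ (Y ω, X ω ∘ f) * (a ⬝ᵥ innovation μ Y X ω) ∂μ
      = (∫ ω, φ (Y ω, X ω ∘ f) ∂μ) * ∫ ω, a ⬝ᵥ innovation μ Y X ω ∂μ :=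
      hind.symm.integral_fun_mul_eq_mul_integral
        (hφ.comp_aemeasurable hVmeas).aestronglyMeasurable hRmeas.aestronglyMeasurable
    _ = 0 := by rw [hmean, mul_zero]

theorem integral_innovation_mul_innovation [Finite σ]
    (hXY : HasGaussianLaw (fun ω => (X ω, Y ω)) μ) (hY : Measurable Y) (k l : σ) :
    ∫ ω, innovation μ Y X ω k * innovation μ Y X ω l ∂μ =
      crossCov μ (innovation μ Y X) (innovation μ Y X) k l := by
  cases nonempty_fintype σ
  cases nonempty_fintype τ
  have := hXY.isProbabilityMeasure
  have hW := hasGaussianLaw_innovation hXY hY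
  rw [crossCov_apply, covariance_eq_sub (hW.eval k).memLp_two (hW.eval l).memLp_two,
    integral_innovation hY (hXY.fst.eval l).integrable, mul_zero, sub_zero]
  rfl

theorem integral_mul_innovation [Finite σ]
    (hXY : HasGaussianLaw (fun ω => (X ω, Y ω)) μ) (hY : Measurable Y) (k l : σ) :
    ∫ ω, X ω k * innovation μ Y X ω l ∂μ =
      crossCov μ (innovation μ Y X) (innovation μ Y X) k l := by
  cases nonempty_fintype σ
  cases nonempty_fintype τ
  have := hXY.isProbabilityMeasure
  have hW := hasGaussianLaw_innovation hXY hY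
  have hX2 := (hXY.fst.eval k).memLp_two
  have hWk := (hW.eval k).memLp_two
  have hWl := (hW.eval l).memLp_two
  obtain ⟨ψ, hψ, hXψ⟩ := exists_measurable_sub_innovation_eq_comp μ Y X
  have hpred : ∫ ω, (X ω - innovation μ Y X ω) k * innovation μ Y X ω l ∂μ = 0 := by
    have hind : IndepFun (fun ω => innovation μ Y X ω l)
        (fun ω => (X ω - innovation μ Y X ω) k) μ := by
      simp only [hXψ]
      exact (indepFun_innovation hXY hY).comp (measurable_pi_apply l)
        (ψ := fun t => ψ t k) (by fun_prop)
    rw [hind.symm.integral_fun_mul_eq_mul_integral (hX2.sub hWk).1 hWl.1,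
      integral_innovation hY (hXY.fst.eval l).integrable, mul_zero]
  have hsub : ∫ ω, (X ω k * innovation μ Y X ω l -
      innovation μ Y X ω k * innovation μ Y X ω l) ∂μ = 0 := by
    simpa only [Pi.sub_apply, sub_mul] using hpred
  rw [← integral_innovation_mul_innovation hXY hY, ← sub_eq_zero]
  exact (integral_sub (hX2.integrable_mul hWl) (hWk.integrable_mul hWl)).symm.trans hsub

end Innovation

section QuadraticForm

variable {Ω I J : Type*} {mΩ : MeasurableSpace Ω} {μ : Measure Ω} [Fintype I]

theorem memLp_mulVec_apply (A : Matrix J I ℝ) {v : Ω → I → ℝ}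
    (hv : ∀ p, MemLp (fun ω => v ω p) 2 μ) (r : J) : MemLp (fun ω => (A *ᵥ v ω) r) 2 μ :=
  memLp_finsetSum _ fun p _ => (hv p).const_mul _

theorem integrable_dotProduct_mulVec (S : Matrix I I ℝ) {u v : Ω → I → ℝ}
    (hu : ∀ p, MemLp (fun ω => u ω p) 2 μ) (hv : ∀ p, MemLp (fun ω => v ω p) 2 μ) :
    Integrable (fun ω => u ω ⬝ᵥ S *ᵥ v ω) μ :=
  integrable_finsetSum _ fun p _ => (hu p).integrable_mul (memLp_mulVec_apply S hv p)

theorem dotProduct_mulVec_le_of_posSemidef {S : Matrix I I ℝ} (hS : S.PosSemidef) (e e' : I → ℝ) :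
    e ⬝ᵥ S *ᵥ e + 2 * ((e' - e) ⬝ᵥ S *ᵥ e) ≤ e' ⬝ᵥ S *ᵥ e' := by
  have hsymm : e ⬝ᵥ S *ᵥ e' = e' ⬝ᵥ S *ᵥ e := by
    rw [dotProduct_mulVec, ← mulVec_transpose, ← conjTranspose_eq_transpose_of_trivial,
      hS.isHermitian.eq, dotProduct_comm]
  have hnonneg : 0 ≤ (e' - e) ⬝ᵥ S *ᵥ (e' - e) := by
    simpa using hS.dotProduct_mulVec_nonneg (e' - e)
  simp only [mulVec_sub, dotProduct_sub, sub_dotProduct, hsymm] at hnonneg ⊢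
  linarith

theorem integral_dotProduct_mulVec_le_of_orthogonal {S : Matrix I I ℝ} (hS : S.PosSemidef)
    {e e' : Ω → I → ℝ} (he : ∀ p, MemLp (fun ω => e ω p) 2 μ)
    (he' : ∀ p, MemLp (fun ω => e' ω p) 2 μ)
    (horth : ∀ p, ∫ ω, (e' ω - e ω) p * (S *ᵥ e ω) p ∂μ = 0) :
    ∫ ω, e ω ⬝ᵥ S *ᵥ e ω ∂μ ≤ ∫ ω, e' ω ⬝ᵥ S *ᵥ e' ω ∂μ := by
  have hd p : MemLp (fun ω => (e' ω - e ω) p) 2 μ := (he' p).sub (he p)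
  have hcross : ∫ ω, (e' ω - e ω) ⬝ᵥ S *ᵥ e ω ∂μ = 0 :=
    (integral_finsetSum _ fun p _ => (hd p).integrable_mul
      (memLp_mulVec_apply S he p)).trans (Finset.sum_eq_zero fun p _ => horth p)
  calc
    ∫ ω, e ω ⬝ᵥ S *ᵥ e ω ∂μ
      = ∫ ω, (e ω ⬝ᵥ S *ᵥ e ω + 2 * ((e' ω - e ω) ⬝ᵥ S *ᵥ e ω)) ∂μ := by
      rw [integral_add (integrable_dotProduct_mulVec S he he)
        ((integrable_dotProduct_mulVec S hd he).const_mul 2), integral_const_mul, hcross,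
        mul_zero, add_zero]
    _ ≤ ∫ ω, e' ω ⬝ᵥ S *ᵥ e' ω ∂μ :=
      integral_mono ((integrable_dotProduct_mulVec S he he).add
        ((integrable_dotProduct_mulVec S hd he).const_mul 2))
        (integrable_dotProduct_mulVec S he' he')
        fun ω => dotProduct_mulVec_le_of_posSemidef hS (e ω) (e' ω)

theorem integral_dotProduct_mulVec_innovation_le {σ τ : Type*} [Fintype σ] [Finite τ]
    {θ : I → Type*} [∀ p, Finite (θ p)] {X : Ω → σ → ℝ} {Y : Ω → τ → ℝ}
    (hXY : HasGaussianLaw (fun ω => (X ω, Y ω)) μ) (hY : Measurable Y)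
    {S : Matrix I I ℝ} (hS : S.PosSemidef) (A : Matrix I σ ℝ) (f : ∀ p, θ p → σ)
    (hstat : ∀ p q,
      (S * A * crossCov μ (innovation μ Y X) (innovation μ Y X)) p (f p q) = 0)
    {e : Ω → I → ℝ} (he : ∀ p, MemLp (fun ω => e ω p) 2 μ)
    {φ : ∀ p, (τ → ℝ) × (θ p → ℝ) → ℝ} (hφ : ∀ p, Measurable (φ p))
    (heφ : ∀ ω p, (e ω - A *ᵥ innovation μ Y X ω) p = φ p (Y ω, X ω ∘ f p)) :
    ∫ ω, (A *ᵥ innovation μ Y X ω) ⬝ᵥ S *ᵥ (A *ᵥ innovation μ Y X ω) ∂μ ≤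
      ∫ ω, e ω ⬝ᵥ S *ᵥ e ω ∂μ := by
  cases nonempty_fintype τ
  have := hXY.isProbabilityMeasure
  have hW k := ((hasGaussianLaw_innovation hXY hY).eval k).memLp_two
  refine integral_dotProduct_mulVec_le_of_orthogonal hS (memLp_mulVec_apply A hW) he fun p => ?_
  simp only [heφ, mulVec_mulVec]
  exact integral_comp_mul_dotProduct_innovation_eq_zero hXY hY ((S * A) p) (f p) (hstat p) (hφ p)

end QuadraticForm

section Blocks

variable {ι κ θ : Type*} {α β : ι → Type*} [Fintype ι]

theorem sum_sum_dotProduct_mulVec_eq [∀ i, Fintype (β i)]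
    {S : ∀ i j, Matrix (β i) (β j) ℝ} {Sbig : Matrix (Σ i, β i) (Σ i, β i) ℝ}
    (hSbig : ∀ i j r r', Sbig ⟨i, r⟩ ⟨j, r'⟩ = S i j r r') (e : ∀ i, β i → ℝ) :
    ∑ i, ∑ j, e i ⬝ᵥ S i j *ᵥ e j =
      (fun p : Σ i, β i => e p.1 p.2) ⬝ᵥ Sbig *ᵥ fun p => e p.1 p.2 := by
  simp only [dotProduct, mulVec, Fintype.sum_sigma, hSbig, Finset.mul_sum]
  exact Finset.sum_congr rfl fun i _ => Finset.sum_comm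

variable [DecidableEq ι]

/-- The matrix taking a stacked innovation `(x̃, ỹ)` to the stacked errors `Lᵢ x̃ − Fᵢ ỹᵢ` that the
strategies `Lᵢ x̂₀ + Fᵢ ỹᵢ` make in estimating `Lᵢ x`. -/
def errorMatrix (L : ∀ i, Matrix (β i) κ ℝ) (F : ∀ i, Matrix (β i) (α i) ℝ) :
    Matrix (Σ i, β i) (κ ⊕ Σ i, α i) ℝ :=
  fromCols (Matrix.of fun p => L p.1 p.2) (-blockDiagonal' F)

variable [Fintype κ] [∀ i, Fintype (α i)]

theorem blockDiagonal'_mulVec_apply (F : ∀ i, Matrix (β i) (α i) ℝ) (v : (Σ i, α i) → ℝ)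
    (i : ι) (r : β i) : (blockDiagonal' F *ᵥ v) ⟨i, r⟩ = (F i *ᵥ fun l => v ⟨i, l⟩) r := by
  simp only [mulVec, dotProduct, Fintype.sum_sigma]
  rw [Finset.sum_eq_single i (fun j _ hji => by simp [blockDiagonal'_apply_ne F _ _ hji.symm])
    (by simp)]
  simp only [blockDiagonal'_apply_eq]

theorem errorMatrix_mulVec_apply (L : ∀ i, Matrix (β i) κ ℝ) (F : ∀ i, Matrix (β i) (α i) ℝ)
    (w : κ ⊕ (Σ i, α i) → ℝ) (i : ι) (r : β i) :
    (errorMatrix L F *ᵥ w) ⟨i, r⟩ =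
      (L i *ᵥ (fun k => w (.inl k)) - F i *ᵥ fun l => w (.inr ⟨i, l⟩)) r := by
  rw [errorMatrix, fromCols_mulVec, Pi.add_apply, neg_mulVec, Pi.neg_apply,
    blockDiagonal'_mulVec_apply, ← sub_eq_add_neg]
  rfl

theorem mul_errorMatrix_mul_apply [∀ i, Fintype (β i)]
    {S : ∀ i j, Matrix (β i) (β j) ℝ} {Sbig : Matrix (Σ i, β i) (Σ i, β i) ℝ}
    (hSbig : ∀ i j r r', Sbig ⟨i, r⟩ ⟨j, r'⟩ = S i j r r')
    (L : ∀ i, Matrix (β i) κ ℝ) (F : ∀ i, Matrix (β i) (α i) ℝ)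
    (P : Matrix (κ ⊕ Σ i, α i) θ ℝ) (i : ι) (r : β i) (l : θ) :
    (Sbig * errorMatrix L F * P) ⟨i, r⟩ l =
      (∑ j, S i j * (L j * P.submatrix Sum.inl id -
        F j * P.submatrix (fun m => Sum.inr ⟨j, m⟩) id)) r l := by
  simp only [Matrix.mul_assoc Sbig, Matrix.sum_apply, mul_apply (M := Sbig),
    mul_apply (M := S _ _), Fintype.sum_sigma, hSbig]
  refine Finset.sum_congr rfl fun j _ => Finset.sum_congr rfl fun r' _ => ?_
  exact congrArg (S i j r r' * ·) (errorMatrix_mulVec_apply L F (fun k => P k l) j r')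

end Blocks

section TeamEstimation

variable {Ω ι κ τ : Type*} {α β : ι → Type*} {mΩ : MeasurableSpace Ω} {μ : Measure Ω}

theorem map_pi_eq_sum_single_mul [Fintype κ] [DecidableEq κ] (ℓ : (κ → ℝ) →ₗ[ℝ] ℝ)
    (a : κ → ℝ) : ℓ a = ∑ k, ℓ (Pi.single k 1) * a k := by
  conv_lhs => rw [pi_eq_sum_univ' a, map_sum]
  simp only [map_smul, smul_eq_mul, mul_comm]

theorem map_prod_pi_eq_sum [Fintype ι] [Fintype κ] [Fintype τ] [∀ i, Fintype (α i)]
    [DecidableEq ι] [DecidableEq κ] [DecidableEq τ] [∀ i, DecidableEq (α i)]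
    (ℓ : (κ → ℝ) × (τ → ℝ) × (∀ i, α i → ℝ) →ₗ[ℝ] ℝ) (a : κ → ℝ) (b : τ → ℝ)
    (c : ∀ i, α i → ℝ) :
    ℓ (a, b, c) = ∑ k, ℓ (Pi.single k 1, 0, 0) * a k + ∑ k, ℓ (0, Pi.single k 1, 0) * b k +
      ∑ i, ∑ k, ℓ (0, 0, Pi.single i (Pi.single k 1)) * c i k := by
  have ha := map_pi_eq_sum_single_mul (ℓ ∘ₗ .inl ℝ _ _) a
  have hb := map_pi_eq_sum_single_mul (ℓ ∘ₗ .inr ℝ _ _ ∘ₗ .inl ℝ _ _) b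
  have hci i := map_pi_eq_sum_single_mul
    (ℓ ∘ₗ .inr ℝ _ _ ∘ₗ .inr ℝ _ _ ∘ₗ .single ℝ (fun i => α i → ℝ) i) (c i)
  have hc : (ℓ ∘ₗ .inr ℝ _ _ ∘ₗ .inr ℝ _ _) c =
      ∑ i, (ℓ ∘ₗ .inr ℝ _ _ ∘ₗ .inr ℝ _ _) (Pi.single i (c i)) := by
    rw [← map_sum, LinearMap.sum_single_apply]
  simp only [LinearMap.comp_apply, LinearMap.inl_apply, LinearMap.inr_apply,
    LinearMap.single_apply] at ha hb hc hci
  have hsplit : (a, b, c) = (a, 0, 0) + (0, b, 0) + (0, 0, c) := by simp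
  simp only [hsplit, map_add, hc, ha, hb, hci, Prod.mk_zero_zero]

theorem hasGaussianLaw_prodMk_of_forall_sum [Fintype ι] [Fintype κ] [Fintype τ]
    [∀ i, Fintype (α i)] {x : Ω → κ → ℝ} {y0 : Ω → τ → ℝ} {y : ∀ i, Ω → α i → ℝ}
    (hx : Measurable x) (hy0 : Measurable y0) (hy : ∀ i, Measurable (y i))
    (h : ∀ (a : κ → ℝ) (b0 : τ → ℝ) (b : ∀ i, α i → ℝ), HasGaussianLaw (fun ω =>
      (∑ k, a k * x ω k) + (∑ k, b0 k * y0 ω k) + ∑ i, ∑ k, b i k * y i ω k) μ) :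
    HasGaussianLaw (fun ω => (x ω, y0 ω, fun i => y i ω)) μ := by
  classical
  have hmeas : Measurable fun ω => (x ω, y0 ω, fun i => y i ω) := by fun_prop
  refine ⟨isGaussian_of_isGaussian_map fun ℓ => ?_⟩
  rw [Measure.map_map (by fun_prop) hmeas]
  have := (h (fun k => ℓ (Pi.single k 1, 0, 0)) (fun k => ℓ (0, Pi.single k 1, 0))
    fun i k => ℓ (0, 0, Pi.single i (Pi.single k 1))).isGaussian_map
  convert this using 2
  ext ω
  exact map_prod_pi_eq_sum ℓ.toLinearMap (x ω) (y0 ω) fun i => y i ω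

/-- The state `x` and the private observations `y i` of all agents stacked into one random vector,
so that a single innovation with respect to the common observation carries all of them. -/
def stack (x : Ω → κ → ℝ) (y : ∀ i, Ω → α i → ℝ) (ω : Ω) : κ ⊕ (Σ i, α i) → ℝ :=
  Sum.elim (x ω) fun p => y p.1 ω p.2

theorem hasGaussianLaw_stack_prodMk [Finite ι] [Finite κ] [Finite τ] [∀ i, Finite (α i)]
    {x : Ω → κ → ℝ} {y0 : Ω → τ → ℝ} {y : ∀ i, Ω → α i → ℝ}
    (hG : HasGaussianLaw (fun ω => (x ω, y0 ω, fun i => y i ω)) μ) :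
    HasGaussianLaw (fun ω => (stack x y ω, y0 ω)) μ := by
  have := Fintype.ofFinite ι
  have := Fintype.ofFinite κ
  have := Fintype.ofFinite τ
  have := fun i => Fintype.ofFinite (α i)
  let stackₗ : (κ → ℝ) × (τ → ℝ) × (∀ i, α i → ℝ) →ₗ[ℝ] (κ ⊕ (Σ i, α i) → ℝ) :=
    LinearMap.pi (Sum.elim (fun k => LinearMap.proj k ∘ₗ LinearMap.fst ℝ _ _)
      fun p => LinearMap.proj p.2 ∘ₗ LinearMap.proj p.1 ∘ₗ LinearMap.snd ℝ _ _ ∘ₗ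
        LinearMap.snd ℝ _ _)
  have hstack ω : stack x y ω = stackₗ (x ω, y0 ω, fun i => y i ω) := by
    ext (k | p) <;> rfl
  simp only [hstack]
  exact hG.map_fun (stackₗ.toContinuousLinearMap.prod
    (ContinuousLinearMap.fst ℝ _ _ ∘L ContinuousLinearMap.snd ℝ _ _))

variable [Fintype ι] [Fintype κ] [∀ i, Fintype (α i)]

theorem errorMatrix_mulVec_innovation_stack [DecidableEq ι] (x : Ω → κ → ℝ) (y0 : Ω → τ → ℝ)
    (y : ∀ i, Ω → α i → ℝ) (L : ∀ i, Matrix (β i) κ ℝ) (F : ∀ i, Matrix (β i) (α i) ℝ)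
    (ω : Ω) (i : ι) (r : β i) :
    (errorMatrix L F *ᵥ innovation μ y0 (stack x y) ω) ⟨i, r⟩ =
      (L i *ᵥ x ω - (L i *ᵥ (x ω - innovation μ y0 x ω) +
        F i *ᵥ innovation μ y0 (y i) ω)) r := by
  rw [errorMatrix_mulVec_apply, mulVec_sub, ← sub_sub, sub_sub_cancel]
  rfl

theorem exists_measurable_sub_errorMatrix_mulVec_eq_comp [DecidableEq ι] (μ : Measure Ω)
    (x : Ω → κ → ℝ) (y0 : Ω → τ → ℝ) (y : ∀ i, Ω → α i → ℝ) (L : ∀ i, Matrix (β i) κ ℝ)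
    (F : ∀ i, Matrix (β i) (α i) ℝ) {i : ι} {g : (τ → ℝ) × (α i → ℝ) → β i → ℝ}
    (hg : Measurable g) (r : β i) :
    ∃ φ : (τ → ℝ) × (α i → ℝ) → ℝ, Measurable φ ∧ ∀ ω,
      (L i *ᵥ x ω - g (y0 ω, y i ω)) r -
        (errorMatrix L F *ᵥ innovation μ y0 (stack x y) ω) ⟨i, r⟩ = φ (y0 ω, y i ω) := by
  obtain ⟨ψ, hψ, hxψ⟩ := exists_measurable_sub_innovation_eq_comp μ y0 x
  obtain ⟨χ, hχ, hyχ⟩ := exists_measurable_sub_innovation_eq_comp μ y0 (y i)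
  have hL : Measurable fun v : κ → ℝ => (L i *ᵥ v) r := by
    simp only [mulVec]
    fun_prop
  have hF : Measurable fun v : α i → ℝ => (F i *ᵥ v) r := by
    simp only [mulVec]
    fun_prop
  refine ⟨fun v => (L i *ᵥ ψ v.1) r + (F i *ᵥ (v.2 - χ v.1)) r - g v r, by fun_prop,
    fun ω => ?_⟩
  simp only [errorMatrix_mulVec_innovation_stack, ← hxψ, ← hyχ, sub_sub_cancel, Pi.sub_apply,
    Pi.add_apply]
  ring

variable [Finite τ] [∀ i, Fintype (β i)]

theorem mul_errorMatrix_mul_crossCov_innovation_eq_zero [DecidableEq ι] {x : Ω → κ → ℝ}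
    {y0 : Ω → τ → ℝ} {y : ∀ i, Ω → α i → ℝ}
    (hG : HasGaussianLaw (fun ω => (stack x y ω, y0 ω)) μ) (hy0 : Measurable y0)
    {Θ : ∀ i, Matrix κ (α i) ℝ}
    (hΘ : ∀ i k l, Θ i k l = ∫ ω, x ω k * innovation μ y0 (y i) ω l ∂μ)
    {Sigma : ∀ i j, Matrix (α i) (α j) ℝ}
    (hSigma : ∀ i j k l, Sigma i j k l =
      ∫ ω, innovation μ y0 (y i) ω k * innovation μ y0 (y j) ω l ∂μ)
    {L : ∀ i, Matrix (β i) κ ℝ} {S : ∀ i j, Matrix (β i) (β j) ℝ}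
    {Sbig : Matrix (Σ i, β i) (Σ i, β i) ℝ}
    (hSbig : ∀ i j r r', Sbig ⟨i, r⟩ ⟨j, r'⟩ = S i j r r') {F : ∀ i, Matrix (β i) (α i) ℝ}
    (hF : ∀ i, ∑ j, (S i j * F j * Sigma j i - S i j * L j * Θ i) = 0)
    (i : ι) (r : β i) (l : α i) :
    (Sbig * errorMatrix L F * crossCov μ (innovation μ y0 (stack x y))
      (innovation μ y0 (stack x y))) ⟨i, r⟩ (.inr ⟨i, l⟩) = 0 := by
  set P := crossCov μ (innovation μ y0 (stack x y)) (innovation μ y0 (stack x y))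
  have hPΘ : P.submatrix Sum.inl (fun m => Sum.inr ⟨i, m⟩) = Θ i := by
    ext k m
    exact (integral_mul_innovation hG hy0 (.inl k) (.inr ⟨i, m⟩)).symm.trans (hΘ i k m).symm
  have hPSigma j : P.submatrix (fun m => Sum.inr ⟨j, m⟩) (fun m => Sum.inr ⟨i, m⟩) =
      Sigma j i := by
    ext k m
    exact (integral_innovation_mul_innovation hG hy0 (.inr ⟨j, k⟩) (.inr ⟨i, m⟩)).symm.trans
      (hSigma j i k m).symm
  have hblock : ∑ j, S i j * (L j * Θ i - F j * Sigma j i) = 0 := by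
    rw [← neg_eq_zero, ← Finset.sum_neg_distrib, ← hF i]
    simp only [Matrix.mul_sub, neg_sub, Matrix.mul_assoc]
  have h := mul_errorMatrix_mul_apply hSbig L F (P.submatrix id fun m => Sum.inr ⟨i, m⟩) i r l
  simp only [submatrix_submatrix, Function.comp_id, Function.id_comp, hPΘ, hPSigma, hblock] at h
  exact h

theorem stmt11_general
    {x : Ω → κ → ℝ} {y0 : Ω → τ → ℝ} {y : ∀ i, Ω → α i → ℝ} (hy0 : Measurable y0)
    (hGauss : HasGaussianLaw (fun ω => (x ω, y0 ω, fun i => y i ω)) μ)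
    {xhat0 : Ω → κ → ℝ}
    (hxhat0 : xhat0 = fun ω k =>
      (μ[(fun ω => x ω k) | MeasurableSpace.comap y0 inferInstance]) ω)
    {yhat : ∀ i, Ω → α i → ℝ}
    (hyhat : ∀ i, yhat i = fun ω k =>
      (μ[(fun ω => y i ω k) | MeasurableSpace.comap y0 inferInstance]) ω)
    {Θhat : ∀ i, Matrix κ (α i) ℝ}
    (hΘhat : ∀ i k l, Θhat i k l = ∫ ω, x ω k * (y i ω l - yhat i ω l) ∂μ)
    {Sigmahat : ∀ i j, Matrix (α i) (α j) ℝ}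
    (hSigmahat : ∀ i j k l, Sigmahat i j k l
      = ∫ ω, (y i ω k - yhat i ω k) * (y j ω l - yhat j ω l) ∂μ)
    {L : ∀ i, Matrix (β i) κ ℝ} {S : ∀ i j, Matrix (β i) (β j) ℝ}
    {Sbig : Matrix (Σ i, β i) (Σ i, β i) ℝ}
    (hSbig : ∀ i j r r', Sbig ⟨i, r⟩ ⟨j, r'⟩ = S i j r r') (hS : Sbig.PosSemidef)
    {J : (∀ i, Ω → β i → ℝ) → ℝ}
    (hJ : ∀ z, J z = ∫ ω, ∑ i, ∑ j,
      ((L i).mulVec (x ω) - z i ω) ⬝ᵥ (S i j).mulVec ((L j).mulVec (x ω) - z j ω) ∂μ)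
    {F : ∀ i, Matrix (β i) (α i) ℝ}
    (hF : ∀ i, ∑ j, (S i j * F j * Sigmahat j i - S i j * L j * Θhat i) = 0)
    {g : ∀ i, (τ → ℝ) × (α i → ℝ) → β i → ℝ} (hg : ∀ i, Measurable (g i))
    (hgL2 : ∀ i k, MemLp (fun ω => g i (y0 ω, y i ω) k) 2 μ) :
    J (fun i ω => L i *ᵥ xhat0 ω + F i *ᵥ (fun l => y i ω l - yhat i ω l)) ≤
      J (fun i ω => g i (y0 ω, y i ω)) := by
  classical
  cases nonempty_fintype τ
  have hxinn ω : xhat0 ω = x ω - innovation μ y0 x ω := by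
    ext k
    simp [hxhat0, innovation]
  have hyinn i ω : (fun l => y i ω l - yhat i ω l) = innovation μ y0 (y i) ω := by
    rw [hyhat]
    rfl
  have hG := hasGaussianLaw_stack_prodMk hGauss
  have hxL2 k : MemLp (fun ω => x ω k) 2 μ := (hGauss.fst.eval k).memLp_two
  have hstat := mul_errorMatrix_mul_crossCov_innovation_eq_zero hG hy0
    (fun i k l => (hΘhat i k l).trans (by simp only [← hyinn]))
    (fun i j k l => (hSigmahat i j k l).trans (by simp only [← hyinn])) hSbig hF
  choose φ hφ hgφ using fun p : Σ i, β i =>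
    exists_measurable_sub_errorMatrix_mulVec_eq_comp μ x y0 y L F (hg p.1) p.2
  have hle := integral_dotProduct_mulVec_innovation_le hG hy0 hS (errorMatrix L F)
    (fun p (l : α p.1) => .inr ⟨p.1, l⟩) (fun p => hstat p.1 p.2)
    (e := fun ω p => (L p.1 *ᵥ x ω - g p.1 (y0 ω, y p.1 ω)) p.2)
    (fun p => (memLp_mulVec_apply (L p.1) hxL2 p.2).sub (hgL2 p.1 p.2)) hφ fun ω p => hgφ p ω
  have hopt ω : errorMatrix L F *ᵥ innovation μ y0 (stack x y) ω = fun p => (L p.1 *ᵥ x ω -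
      (L p.1 *ᵥ (x ω - innovation μ y0 x ω) + F p.1 *ᵥ innovation μ y0 (y p.1) ω)) p.2 :=
    funext fun p => errorMatrix_mulVec_innovation_stack x y0 y L F ω p.1 p.2
  simpa only [hJ, sum_sum_dotProduct_mulVec_eq hSbig, hxinn, hyinn, hopt] using hle

end TeamEstimation

/-- Multi-agent Gaussian estimation: if the gains `F₁,…,Fₙ` satisfy
`Σⱼ (Sᵢⱼ Fⱼ Σ̂ⱼᵢ − Sᵢⱼ Lⱼ Θ̂ᵢ) = 0` for every `i`, then the strategy
`ẑᵢ = Lᵢ x̂₀ + Fᵢ ỹᵢ` minimizes the expected team estimation error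
`J(g) = E[Σᵢⱼ (Lᵢ x − ẑᵢ)ᵀ Sᵢⱼ (Lⱼ x − ẑⱼ)]` over all measurable square-integrable
strategies `ẑᵢ = gᵢ(y₀, yᵢ)`. -/
theorem stmt11 {Ω : Type*} [MeasurableSpace Ω] (μ : Measure Ω) [IsProbabilityMeasure μ]
    (dx q n : ℕ) (dy dz : Fin n → ℕ)
    (x : Ω → Fin dx → ℝ) (y0 : Ω → Fin q → ℝ) (y : ∀ i : Fin n, Ω → Fin (dy i) → ℝ)
    (hx : Measurable x) (hy0 : Measurable y0) (hy : ∀ i, Measurable (y i))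
    (hGauss : ∀ (a : Fin dx → ℝ) (b0 : Fin q → ℝ) (b : ∀ i, Fin (dy i) → ℝ),
      ∃ v : NNReal,
        μ.map (fun ω => (∑ k, a k * x ω k) + (∑ k, b0 k * y0 ω k)
          + ∑ i, ∑ k, b i k * y i ω k) = gaussianReal 0 v)
    (Sigma00 : Matrix (Fin q) (Fin q) ℝ)
    (hSigma00 : ∀ k l, Sigma00 k l = ∫ ω, y0 ω k * y0 ω l ∂μ)
    (hinv0 : IsUnit Sigma00.det)
    (xhat0 : Ω → Fin dx → ℝ)
    (hxhat0 : xhat0 = fun ω k =>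
      (μ[(fun ω => x ω k) | MeasurableSpace.comap y0 inferInstance]) ω)
    (yhat : ∀ i : Fin n, Ω → Fin (dy i) → ℝ)
    (hyhat : ∀ i, yhat i = fun ω k =>
      (μ[(fun ω => y i ω k) | MeasurableSpace.comap y0 inferInstance]) ω)
    (Θhat : ∀ i, Matrix (Fin dx) (Fin (dy i)) ℝ)
    (hΘhat : ∀ i k l, Θhat i k l = ∫ ω, x ω k * (y i ω l - yhat i ω l) ∂μ)
    (Sigmahat : ∀ i j, Matrix (Fin (dy i)) (Fin (dy j)) ℝ)
    (hSigmahat : ∀ i j k l, Sigmahat i j k l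
      = ∫ ω, (y i ω k - yhat i ω k) * (y j ω l - yhat j ω l) ∂μ)
    (hinv : ∀ i, IsUnit (Sigmahat i i).det)
    (L : ∀ i : Fin n, Matrix (Fin (dz i)) (Fin dx) ℝ)
    (S : ∀ i j : Fin n, Matrix (Fin (dz i)) (Fin (dz j)) ℝ)
    (Sbig : Matrix (Σ i : Fin n, Fin (dz i)) (Σ i : Fin n, Fin (dz i)) ℝ)
    (hSbig : ∀ (i j : Fin n) (r : Fin (dz i)) (r' : Fin (dz j)),
      Sbig ⟨i, r⟩ ⟨j, r'⟩ = S i j r r')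
    (hSpd : Sbig.PosDef)
    (J : (∀ i : Fin n, Ω → Fin (dz i) → ℝ) → ℝ)
    (hJ : ∀ z, J z = ∫ ω, ∑ i, ∑ j,
      ((L i).mulVec (x ω) - z i ω) ⬝ᵥ (S i j).mulVec ((L j).mulVec (x ω) - z j ω) ∂μ)
    (F : ∀ i : Fin n, Matrix (Fin (dz i)) (Fin (dy i)) ℝ)
    (hF : ∀ i, ∑ j, (S i j * F j * Sigmahat j i - S i j * L j * Θhat i) = 0) :
    ∀ g : ∀ i : Fin n, (Fin q → ℝ) × (Fin (dy i) → ℝ) → Fin (dz i) → ℝ,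
      (∀ i, Measurable (g i)) →
      (∀ i k, MemLp (fun ω => g i (y0 ω, y i ω) k) 2 μ) →
      J (fun i ω => (L i).mulVec (xhat0 ω)
            + (F i).mulVec (fun l => y i ω l - yhat i ω l))
        ≤ J (fun i ω => g i (y0 ω, y i ω)) := by
  intro g hg hgL2
  refine stmt11_general hy0 (hasGaussianLaw_prodMk_of_forall_sum hx hy0 hy fun a b0 b => ?_)
    hxhat0 hyhat hΘhat hSigmahat hSbig hSpd.posSemidef hJ hF hg hgL2
  exact ⟨(hGauss a b0 b).choose_spec ▸ inferInstance⟩
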